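/- Let ρ_1, …, ρ_n be density operators on H = H_1 ⊗ ⋯ ⊗ H_K with pairwise orthogonal supports whose supports together span H (i.e., the projections P_k onto the supports satisfy P_1 + ⋯ + P_n = I). Then {ρ_1, …, ρ_n} is perfectly distinguishable by separable operations if and only if P_k is separable for each 1 ≤ k ≤ n. -/

import Mathlib

/-!
If `tr (M k * ρ j) = 0` with both factors positive semidefinite, then `M k * ρ j = 0`
(`mul_eq_zero_of_trace_mul_eq_zero`), so `M k` annihilates the support of `ρ j`: `M k * P j = 0`
for `k ≠ j`. Multiplying `∑ j, P j = 1` on the left by `M k` gives `M k = M k * P k`, and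
multiplying `∑ j, M j = 1` on the right by `P k` gives `P k = M k * P k`. Hence the only
measurement that can distinguish the states is the projective one, `M = P`, and it does so.
-/


open Matrix BigOperators ComplexOrder

/-- A vector on `H = H_1 ⊗ ⋯ ⊗ H_K` (realized as functions on the product of the
index sets of fixed bases of the factors) is a product vector if it factorizes as
`v(x) = ∏ k, a k (x k)`. -/
def IsProductVec {K : ℕ} (d : Fin K → ℕ) (v : (∀ k, Fin (d k)) → ℂ) : Prop :=
  ∃ a : ∀ k, Fin (d k) → ℂ, v = fun x => ∏ k, a k (x k)

/-- The rank-one operator `|v⟩⟨v|`. -/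
def ketBra {ι : Type} (v : ι → ℂ) : Matrix ι ι ℂ :=
  Matrix.vecMulVec v (star v)

/-- An operator is separable if it is a finite sum of rank-one operators `|a⟩⟨a|`
with each `a` a product vector (the zero operator, `n = 0`, counts as separable). -/
def SeparableOp {K : ℕ} (d : Fin K → ℕ)
    (E : Matrix (∀ k, Fin (d k)) (∀ k, Fin (d k)) ℂ) : Prop :=
  ∃ (n : ℕ) (v : Fin n → (∀ k, Fin (d k)) → ℂ),
    (∀ i, IsProductVec d (v i)) ∧ E = ∑ i, ketBra (v i)

/-- Perfect distinguishability of the states `ρ 1, …, ρ n` by separable operations: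
there is a POVM consisting of separable positive semidefinite operators which
identifies the states with certainty. -/
def PerfDistSep {K : ℕ} (d : Fin K → ℕ) {n : ℕ}
    (ρ : Fin n → Matrix (∀ k, Fin (d k)) (∀ k, Fin (d k)) ℂ) : Prop :=
  ∃ M : Fin n → Matrix (∀ k, Fin (d k)) (∀ k, Fin (d k)) ℂ,
    (∀ k, (M k).PosSemidef) ∧ (∀ k, SeparableOp d (M k)) ∧
    (∑ k, M k) = 1 ∧
    ∀ k j, (M k * ρ j).trace = if k = j then 1 else 0

open scoped MatrixOrder Matrix.Norms.L2Operator in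
/-- Two positive semidefinite matrices that are orthogonal for the trace pairing have product
zero. -/
lemma mul_eq_zero_of_trace_mul_eq_zero {ι : Type*} [Fintype ι]
    {A B : Matrix ι ι ℂ} (hA : A.PosSemidef) (hB : B.PosSemidef) (h : (A * B).trace = 0) :
    A * B = 0 := by
  classical
  obtain ⟨X, rfl⟩ := CStarAlgebra.nonneg_iff_eq_star_mul_self.mp hA.nonneg
  obtain ⟨Y, rfl⟩ := CStarAlgebra.nonneg_iff_eq_star_mul_self.mp hB.nonneg
  simp only [Matrix.star_eq_conjTranspose] at h ⊢
  -- `tr (Xᴴ X Yᴴ Y) = tr ((X Yᴴ)ᴴ (X Yᴴ))` is the squared Frobenius norm of `X Yᴴ`.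
  have h0 : X * Yᴴ = 0 := by
    rw [← Matrix.trace_conjTranspose_mul_self_eq_zero_iff, ← h, Matrix.trace_mul_comm (Xᴴ * X),
      Matrix.conjTranspose_mul, Matrix.conjTranspose_conjTranspose,
      Matrix.mul_assoc Y, Matrix.mul_assoc Yᴴ, Matrix.trace_mul_comm Yᴴ]
    simp only [Matrix.mul_assoc]
  calc Xᴴ * X * (Yᴴ * Y) = Xᴴ * (X * Yᴴ) * Y := by simp only [Matrix.mul_assoc]
    _ = 0 := by rw [h0, Matrix.mul_zero, Matrix.zero_mul]

/-- Range inclusion gives a factorization, column by column. -/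
lemma exists_eq_mul_of_range_le {ι : Type*} [Fintype ι] {A B : Matrix ι ι ℂ}
    (h : LinearMap.range B.mulVecLin ≤ LinearMap.range A.mulVecLin) : ∃ C, B = A * C := by
  classical
  have hcol : ∀ j, ∃ c, A *ᵥ c = B.col j := fun j => by
    obtain ⟨c, hc⟩ := h ⟨Pi.single j 1, rfl⟩
    exact ⟨c, by simpa using hc⟩
  choose c hc using hcol
  refine ⟨Matrix.of fun i j => c j i, ?_⟩
  ext i j
  exact (congrFun (hc j) i).symm

/-- If the supports of the density operators `ρ 1, …, ρ n` (pairwise orthogonal)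
together span the whole space, i.e. the support projections satisfy `∑ k, P k = I`,
then `{ρ k}` is perfectly distinguishable by separable operations iff each `P k`
is separable. -/
theorem perfDistSep_iff_proj_separable_of_spanning {K : ℕ} (d : Fin K → ℕ) {n : ℕ}
    (ρ P : Fin n → Matrix (∀ k, Fin (d k)) (∀ k, Fin (d k)) ℂ)
    (hρ : ∀ k, (ρ k).PosSemidef) (hρtr : ∀ k, (ρ k).trace = 1)
    (horth : ∀ k j, k ≠ j → ρ k * ρ j = 0)
    (hPherm : ∀ k, (P k).IsHermitian) (hPproj : ∀ k, P k * P k = P k)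
    (hPrange : ∀ k, LinearMap.range (P k).mulVecLin
      = LinearMap.range (ρ k).mulVecLin)
    (hspan : (∑ k, P k) = 1) :
    PerfDistSep d ρ ↔ ∀ k, SeparableOp d (P k) := by
  classical
  choose A hA using fun k => exists_eq_mul_of_range_le (hPrange k).le
  have hPρ : ∀ k, P k * ρ k = ρ k := fun k => by
    obtain ⟨C, hC⟩ := exists_eq_mul_of_range_le (hPrange k).ge
    rw [hC, ← Matrix.mul_assoc, hPproj]
  constructor
  · rintro ⟨M, hM, hsep, hsum, htr⟩ k
    have hMP : ∀ i j, i ≠ j → M i * P j = 0 := fun i j hij => by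
      have h0 := mul_eq_zero_of_trace_mul_eq_zero (hM i) (hρ j) (by rw [htr, if_neg hij])
      rw [hA, ← Matrix.mul_assoc, h0, Matrix.zero_mul]
    have h1 : M k = M k * P k := by
      conv_lhs => rw [← Matrix.mul_one (M k), ← hspan, Finset.mul_sum]
      exact Finset.sum_eq_single k (fun j _ hj => hMP k j hj.symm) (by simp)
    have h2 : P k = M k * P k := by
      conv_lhs => rw [← Matrix.one_mul (P k), ← hsum, Finset.sum_mul]
      exact Finset.sum_eq_single k (fun j _ hj => hMP j k hj) (by simp)
    rw [h2, ← h1]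
    exact hsep k
  · intro hsep
    refine ⟨P, fun k => ?_, hsep, hspan, fun k j => ?_⟩
    · have h := Matrix.posSemidef_conjTranspose_mul_self (P k)
      rwa [(hPherm k).eq, hPproj] at h
    · split_ifs with hkj
      · rw [← hkj, hPρ, hρtr]
      · -- Taking adjoints in `P k = ρ k * A k` puts `ρ k` next to `ρ j`.
        rw [← (hPherm k).eq, hA k, Matrix.conjTranspose_mul, (hρ k).isHermitian.eq,
          Matrix.mul_assoc, horth k j hkj, Matrix.mul_zero, Matrix.trace_zero]
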